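/- The sequences s(n,2) and s'(n,2) both converge to 1/2 as n → ∞; that is, s_2 = s'_2 = 1/2. -/

import Mathlib

/-!
Only the graph on `Fin n` with edge set `𝓔_2` matters: `hSum n 2 𝓔` is its edge density plus the
density of independent triples, i.e. of triangles of the complementary graph. If the complementary
graph has edge density `x`, Goodman's inequality bounds its triangle density below by
`x (2 x - 1) - O(1/n)`, so the sum is at least `1 - 2 x + 2 x² - O(1/n) ≥ 1/2 - O(1/n)`
(`hSum_lower`). Conversely, two disjoint edges of sizes `⌊n/2⌋` and `⌈n/2⌉` leave no independent
triple and cover at most half of all pairs (`exists_hSum_le`), and this hypergraph is 1-linear.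
Since `s' ≤ s`, both sequences are squeezed to `1/2`.
-/

open Finset

/-- A hypergraph (edge set `𝓔` over vertex type `α`) is `q`-linear if any two
distinct edges intersect in fewer than `q` vertices. -/
def qLinear {α : Type*} [DecidableEq α] (q : ℕ) (𝓔 : Finset (Finset α)) : Prop :=
  ∀ E ∈ 𝓔, ∀ E' ∈ 𝓔, E ≠ E' → (E ∩ E').card < q

/-- `𝓔_k`: the family of `k`-element sets contained in some edge of `𝓔`. -/
def secE {α : Type*} [DecidableEq α] (k : ℕ) (𝓔 : Finset (Finset α)) :
    Finset (Finset α) :=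
  𝓔.biUnion fun E => E.powersetCard k

/-- `𝓔⁰_{k+1}` (relative to vertex set `V`): the `(k+1)`-element subsets of `V`
none of whose `k`-element subsets belongs to `𝓔_k`. -/
def zeroE {α : Type*} [DecidableEq α] (V : Finset α) (k : ℕ)
    (𝓔 : Finset (Finset α)) : Finset (Finset α) :=
  (V.powersetCard (k + 1)).filter fun F => ∀ G ∈ F.powersetCard k, G ∉ secE k 𝓔

/-- The YBLM-type sum `Σ_{S ∈ 𝓔_k ∪ 𝓔⁰_{k+1}} C(n,|S|)⁻¹` for a hypergraph on
`n` vertices. -/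
noncomputable def hSum (n k : ℕ) (𝓔 : Finset (Finset (Fin n))) : ℝ :=
  ∑ S ∈ secE k 𝓔 ∪ zeroE Finset.univ k 𝓔, ((n.choose S.card : ℝ))⁻¹

/-- `s(n,k)`: the minimum of `hSum n k 𝓔` over all `(k-1)`-linear hypergraphs
on `n` vertices. -/
noncomputable def sVal (n k : ℕ) : ℝ :=
  sInf {r : ℝ | ∃ 𝓔 : Finset (Finset (Fin n)), qLinear (k - 1) 𝓔 ∧ r = hSum n k 𝓔}

/-- `s'(n,k)`: the minimum of `hSum n k 𝓔` over all hypergraphs on `n`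
vertices. -/
noncomputable def s'Val (n k : ℕ) : ℝ :=
  sInf {r : ℝ | ∃ 𝓔 : Finset (Finset (Fin n)), r = hSum n k 𝓔}

/-! ### The sum as a combination of two densities -/

theorem hSum_two_eq (n : ℕ) (𝓔 : Finset (Finset (Fin n))) :
    hSum n 2 𝓔 = ((secE 2 𝓔).card : ℝ) * ((n.choose 2 : ℝ))⁻¹
      + ((zeroE Finset.univ 2 𝓔).card : ℝ) * ((n.choose 3 : ℝ))⁻¹ := by
  have h2 : ∀ S ∈ secE 2 𝓔, S.card = 2 := by
    intro S hS
    simp only [secE, mem_biUnion, mem_powersetCard] at hS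
    obtain ⟨E, -, -, h⟩ := hS
    exact h
  have h3 : ∀ S ∈ zeroE Finset.univ 2 𝓔, S.card = 3 := by
    intro S hS
    simp only [zeroE, mem_filter, mem_powersetCard] at hS
    exact hS.1.2
  have hd : Disjoint (secE 2 𝓔) (zeroE Finset.univ 2 𝓔) := by
    rw [Finset.disjoint_left]
    intro S hS hS'
    have := h2 S hS
    have := h3 S hS'
    omega
  unfold hSum
  rw [Finset.sum_union hd, Finset.sum_congr rfl (fun S hS => by rw [h2 S hS]),
    Finset.sum_congr (s₁ := zeroE Finset.univ 2 𝓔) rfl (fun S hS => by rw [h3 S hS])]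
  simp

/-! ### The complementary graph and Goodman's inequality -/

/-- Adjacency matrix of the graph on `Fin n` whose edges are the pairs outside `S`. -/
noncomputable def coAdj {n : ℕ} (S : Finset (Finset (Fin n))) (u v : Fin n) : ℝ :=
  if u ≠ v ∧ ({u, v} : Finset (Fin n)) ∉ S then 1 else 0

theorem coAdj_comm {n : ℕ} (S : Finset (Finset (Fin n))) (u v : Fin n) :
    coAdj S u v = coAdj S v u := by
  simp only [coAdj, Finset.pair_comm u v, ne_comm (a := u)]

theorem coAdj_nonneg {n : ℕ} (S : Finset (Finset (Fin n))) (u v : Fin n) : 0 ≤ coAdj S u v := by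
  unfold coAdj; split_ifs <;> norm_num

theorem coAdj_le_one {n : ℕ} (S : Finset (Finset (Fin n))) (u v : Fin n) : coAdj S u v ≤ 1 := by
  unfold coAdj; split_ifs <;> norm_num

theorem coAdj_sum_le {n : ℕ} (S : Finset (Finset (Fin n))) :
    ∑ u, ∑ v, coAdj S u v ≤ (n : ℝ) * (n - 1) := by
  have : ∀ u, ∑ v, coAdj S u v ≤ (n : ℝ) - 1 := by
    intro u
    calc ∑ v, coAdj S u v ≤ ∑ v, ((1 : ℝ) - if u = v then 1 else 0) := by
          refine Finset.sum_le_sum fun v _ => ?_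
          unfold coAdj
          split_ifs <;> simp_all
      _ = (n : ℝ) - 1 := by simp
  calc _ ≤ ∑ u : Fin n, ((n : ℝ) - 1) := Finset.sum_le_sum fun u _ => this u
    _ = _ := by simp; ring

/-- Each pair of `S` accounts for at most two ordered pairs, so the ordered pairs that are
not counted by `coAdj` number at most `2 |S|`. -/
theorem coAdj_sum_ge {n : ℕ} (S : Finset (Finset (Fin n))) :
    (n : ℝ) * (n - 1) ≤ ∑ u, ∑ v, coAdj S u v + 2 * S.card := by
  set P : Finset (Fin n × Fin n) :=
    univ.filter fun p => p.1 ≠ p.2 ∧ ({p.1, p.2} : Finset (Fin n)) ∈ S with hP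
  have hcard : P.card ≤ 2 * S.card := by
    refine Finset.card_le_mul_card_image_of_maps_to
      (f := fun p : Fin n × Fin n => ({p.1, p.2} : Finset (Fin n))) ?_ 2 ?_
    · intro p hp
      exact (Finset.mem_filter.1 hp).2.2
    · intro s _
      rcases Finset.eq_empty_or_nonempty
        (P.filter fun p => ({p.1, p.2} : Finset (Fin n)) = s) with h | ⟨⟨a, b⟩, h⟩
      · simp [h]
      · simp only [hP, mem_filter, mem_univ, true_and] at h
        obtain ⟨⟨hab, -⟩, rfl⟩ := h
        refine (Finset.card_le_card (t := {(a, b), (b, a)}) ?_).trans Finset.card_le_two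
        rintro ⟨c, d⟩ hcd
        simp only [hP, mem_filter, mem_univ, true_and, Finset.ext_iff, mem_insert,
          mem_singleton, Prod.mk.injEq] at hcd ⊢
        have h1 := (hcd.2 c).1 (Or.inl rfl)
        have h2 := (hcd.2 d).1 (Or.inr rfl)
        grind
  have hPsum : (P.card : ℝ) = ∑ u : Fin n, ∑ v : Fin n,
      if u ≠ v ∧ ({u, v} : Finset (Fin n)) ∈ S then (1 : ℝ) else 0 := by
    rw [hP, Finset.card_filter, Nat.cast_sum, Fintype.sum_prod_type]
    simp
  have htot : (n : ℝ) * (n - 1) = ∑ u, ∑ v, coAdj S u v + P.card := by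
    rw [hPsum, ← Finset.sum_add_distrib]
    have : ∀ u : Fin n, (∑ v, coAdj S u v + ∑ v : Fin n,
        if u ≠ v ∧ ({u, v} : Finset (Fin n)) ∈ S then (1 : ℝ) else 0) = (n : ℝ) - 1 := by
      intro u
      rw [← Finset.sum_add_distrib]
      calc _ = ∑ v, ((1 : ℝ) - if u = v then 1 else 0) := by
            refine Finset.sum_congr rfl fun v _ => ?_
            unfold coAdj
            split_ifs <;> simp_all
        _ = _ := by simp
    rw [Finset.sum_congr rfl fun u _ => this u]
    simp; ring
  have : (P.card : ℝ) ≤ 2 * S.card := by exact_mod_cast hcard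
  linarith

/-- Goodman's inequality for ordered triangles: if `u` and `v` are adjacent, they have at least
`d(u) + d(v) - n` common neighbours; summing over adjacent pairs and applying Cauchy-Schwarz to
the degrees gives the bound. It is stated with denominators cleared. -/
theorem goodman {n : ℕ} (S : Finset (Finset (Fin n))) :
    2 * (∑ u, ∑ v, coAdj S u v) ^ 2 ≤
      n * (∑ u, ∑ v, ∑ w, coAdj S u v * coAdj S u w * coAdj S v w)
        + (n : ℝ) ^ 2 * ∑ u, ∑ v, coAdj S u v := by
  set a := coAdj S
  have h1 : ∑ u, ∑ v, ∑ w, (a u v * a u w + a u v * a v w - a u v) ≤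
      ∑ u, ∑ v, ∑ w, a u v * a u w * a v w := by
    refine Finset.sum_le_sum fun u _ => Finset.sum_le_sum fun v _ =>
      Finset.sum_le_sum fun w _ => ?_
    have h0 : 0 ≤ a u v := coAdj_nonneg S u v
    have h2 : 0 ≤ 1 - a u w := sub_nonneg.2 (coAdj_le_one S u w)
    have h3 : 0 ≤ 1 - a v w := sub_nonneg.2 (coAdj_le_one S v w)
    nlinarith [mul_nonneg h0 (mul_nonneg h2 h3)]
  have h2 : ∑ u, ∑ v, ∑ w, (a u v * a u w + a u v * a v w - a u v) =
      2 * ∑ u, (∑ v, a u v) ^ 2 - n * ∑ u, ∑ v, a u v := by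
    have e1 : ∑ u, ∑ v, ∑ w, a u v * a u w = ∑ u, (∑ v, a u v) ^ 2 := by
      refine Finset.sum_congr rfl fun u _ => ?_
      rw [sq, Finset.sum_mul_sum]
    have e2 : ∑ u, ∑ v, ∑ w, a u v * a v w = ∑ u, (∑ v, a u v) ^ 2 := by
      rw [← e1, Finset.sum_comm]
      refine Finset.sum_congr rfl fun u _ => Finset.sum_congr rfl fun v _ =>
        Finset.sum_congr rfl fun w _ => ?_
      rw [show a v u = a u v from coAdj_comm S v u]
    have e3 : ∑ u, ∑ v, ∑ _w : Fin n, a u v = n * ∑ u, ∑ v, a u v := by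
      simp [Finset.mul_sum]
    simp only [Finset.sum_sub_distrib, Finset.sum_add_distrib]
    rw [e1, e2, e3]
    ring
  have h3 : (∑ u, ∑ v, a u v) ^ 2 ≤ n * ∑ u, (∑ v, a u v) ^ 2 := by
    simpa using sq_sum_le_card_mul_sum_sq (s := (univ : Finset (Fin n)))
      (f := fun u => ∑ v, a u v)
  have h4 : (n : ℝ) * (2 * ∑ u, (∑ v, a u v) ^ 2 - n * ∑ u, ∑ v, a u v) ≤
      n * ∑ u, ∑ v, ∑ w, a u v * a u w * a v w :=
    mul_le_mul_of_nonneg_left (h2 ▸ h1) (Nat.cast_nonneg n)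
  nlinarith

/-- The ordered triangles outside `𝓔_2` number at most `6 |𝓔⁰_3|`: each is an ordering of
its vertex set. -/
theorem triangle_sum_le {n : ℕ} (𝓔 : Finset (Finset (Fin n))) :
    ∑ u, ∑ v, ∑ w, coAdj (secE 2 𝓔) u v * coAdj (secE 2 𝓔) u w * coAdj (secE 2 𝓔) v w
      ≤ 6 * ((zeroE Finset.univ 2 𝓔).card : ℝ) := by
  set S := secE 2 𝓔 with hS
  set P : Finset (Fin n × Fin n × Fin n) :=
    univ.filter fun p => (p.1 ≠ p.2.1 ∧ ({p.1, p.2.1} : Finset (Fin n)) ∉ S) ∧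
      (p.1 ≠ p.2.2 ∧ ({p.1, p.2.2} : Finset (Fin n)) ∉ S) ∧
      (p.2.1 ≠ p.2.2 ∧ ({p.2.1, p.2.2} : Finset (Fin n)) ∉ S) with hP
  have hcard : P.card ≤ 6 * (zeroE Finset.univ 2 𝓔).card := by
    refine Finset.card_le_mul_card_image_of_maps_to
      (f := fun p : Fin n × Fin n × Fin n => ({p.1, p.2.1, p.2.2} : Finset (Fin n))) ?_ 6 ?_
    · rintro ⟨a, b, c⟩ hp
      obtain ⟨⟨hab, hab'⟩, ⟨hac, hac'⟩, hbc, hbc'⟩ := (Finset.mem_filter.1 hp).2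
      dsimp only at hab hab' hac hac' hbc hbc'
      simp only [zeroE, mem_filter, mem_powersetCard, subset_univ, true_and]
      refine ⟨Finset.card_eq_three.2 ⟨a, b, c, hab, hac, hbc, rfl⟩, ?_⟩
      rintro G ⟨hG, hG2⟩
      obtain ⟨x, y, hxy, rfl⟩ := Finset.card_eq_two.1 hG2
      have hx : x ∈ ({a, b, c} : Finset (Fin n)) := hG (by simp)
      have hy : y ∈ ({a, b, c} : Finset (Fin n)) := hG (by simp)
      simp only [mem_insert, mem_singleton] at hx hy
      rw [← hS]
      rcases hx with rfl | rfl | rfl <;> rcases hy with rfl | rfl | rfl <;>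
        first
        | exact absurd rfl hxy
        | assumption
        | (rw [Finset.pair_comm]; assumption)
    · intro s _
      rcases Finset.eq_empty_or_nonempty
        (P.filter fun p => ({p.1, p.2.1, p.2.2} : Finset (Fin n)) = s) with h | ⟨⟨a, b, c⟩, h⟩
      · simp [h]
      · simp only [hP, mem_filter, mem_univ, true_and] at h
        obtain ⟨-, rfl⟩ := h
        refine (Finset.card_le_card (t := {(a, b, c), (a, c, b), (b, a, c), (b, c, a),
          (c, a, b), (c, b, a)}) ?_).trans Finset.card_le_six
        rintro ⟨x, y, z⟩ hxyz
        simp only [hP, mem_filter, mem_univ, true_and, Finset.ext_iff, mem_insert,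
          mem_singleton, Prod.mk.injEq] at hxyz ⊢
        obtain ⟨⟨⟨hxy, -⟩, ⟨hxz, -⟩, hyz, -⟩, he⟩ := hxyz
        have h1 := (he x).1 (by simp)
        have h2 := (he y).1 (by simp)
        have h3 := (he z).1 (by simp)
        clear he
        rcases h1 with rfl | rfl | rfl <;> rcases h2 with rfl | rfl | rfl <;>
          rcases h3 with rfl | rfl | rfl <;> simp_all
  have hPsum : (P.card : ℝ) =
      ∑ u, ∑ v, ∑ w, coAdj S u v * coAdj S u w * coAdj S v w := by
    rw [hP, Finset.card_filter, Nat.cast_sum, Fintype.sum_prod_type]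
    refine Finset.sum_congr rfl fun u _ => ?_
    rw [Fintype.sum_prod_type]
    refine Finset.sum_congr rfl fun v _ => Finset.sum_congr rfl fun w _ => ?_
    simp only [coAdj, ← ite_and, mul_ite, mul_one, mul_zero, Nat.cast_ite, Nat.cast_one,
      Nat.cast_zero]
    congr 1
    apply propext
    tauto
  rw [← hPsum]
  exact_mod_cast hcard

/-! ### Lower bound for every hypergraph -/

/-- With `x` the edge density of the complementary graph, the sum is at least
`1 - 2 x + 2 x² - 2 x / (n - 2)`, which is minimised near `x = 1/2`. -/
theorem hSum_lower {n : ℕ} (hn : 3 ≤ n) (𝓔 : Finset (Finset (Fin n))) :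
    1 / 2 - 2 / ((n : ℝ) - 2) ≤ hSum n 2 𝓔 := by
  rw [hSum_two_eq]
  have hA := coAdj_sum_ge (secE 2 𝓔)
  have hA' := coAdj_sum_le (secE 2 𝓔)
  have hG := goodman (secE 2 𝓔)
  have hT := triangle_sum_le 𝓔
  have hD0 : 0 ≤ ∑ u, ∑ v, coAdj (secE 2 𝓔) u v :=
    Finset.sum_nonneg fun u _ => Finset.sum_nonneg fun v _ => coAdj_nonneg _ u v
  set D := ∑ u, ∑ v, coAdj (secE 2 𝓔) u v
  set T := ∑ u, ∑ v, ∑ w,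
    coAdj (secE 2 𝓔) u v * coAdj (secE 2 𝓔) u w * coAdj (secE 2 𝓔) v w
  set e : ℝ := ((secE 2 𝓔).card : ℝ)
  set z : ℝ := ((zeroE Finset.univ 2 𝓔).card : ℝ)
  have c2 : ((n.choose 2 : ℕ) : ℝ) = n * (n - 1) / 2 := Nat.cast_choose_two ℝ n
  have c3 : ((n.choose 3 : ℕ) : ℝ) = n * (n - 1) * (n - 2) / 6 := by
    obtain ⟨m, rfl⟩ := Nat.exists_eq_add_of_le' hn
    have h := Nat.add_one_mul_choose_eq (m + 2) 2
    have h' : ((m + 2 + 1 : ℕ) : ℝ) * ((m + 2).choose 2 : ℕ) = ((m + 3).choose 3 : ℕ) * 3 := by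
      exact_mod_cast h
    rw [Nat.cast_choose_two] at h'
    push_cast at h' ⊢
    linarith
  have hnr : (3 : ℝ) ≤ n := by exact_mod_cast hn
  rw [c2, c3]
  -- `x` is the edge density of the complementary graph.
  obtain ⟨x, hx⟩ : ∃ x : ℝ, D = x * (n * (n - 1)) :=
    ⟨D / (n * (n - 1)), by field_simp [show (n : ℝ) - 1 ≠ 0 by linarith]⟩
  have hN : (0 : ℝ) < n * (n - 1) := by nlinarith
  have hx0 : 0 ≤ x := by
    rw [hx] at hD0
    exact nonneg_of_mul_nonneg_left hD0 hN
  have hx1 : x ≤ 1 := by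
    rw [hx] at hA'
    nlinarith
  have hE : 1 - x ≤ e * ((n : ℝ) * (n - 1) / 2)⁻¹ := by
    rw [← div_eq_mul_inv, le_div_iff₀ (by linarith)]
    rw [hx] at hA
    linarith
  have hZ : 2 * x ^ 2 - x - 2 * x / (n - 2) ≤ z * ((n : ℝ) * (n - 1) * (n - 2) / 6)⁻¹ := by
    have hm : (0 : ℝ) < n - 2 := by linarith
    rw [← div_eq_mul_inv, le_div_iff₀ (by positivity)]
    have e1 : (2 * x ^ 2 - x - 2 * x / (n - 2)) * ((n : ℝ) * (n - 1) * (n - 2) / 6)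
        = n * (n - 1) / 6 * (2 * x ^ 2 * (n - 2) - x * n) := by
      field_simp
      ring
    rw [e1]
    have h6 : n * T ≤ n * (6 * z) := mul_le_mul_of_nonneg_left hT (by linarith)
    rw [hx] at hG
    have h7 : (n : ℝ) * (2 * x ^ 2 * n * (n - 1) ^ 2 - n * (x * (n * (n - 1)))) ≤ n * (6 * z) := by
      nlinarith
    have h8 := le_of_mul_le_mul_left h7 (by linarith)
    have h9 : 0 ≤ x ^ 2 * (n * (n - 1)) := by positivity
    nlinarith
  have hlast : 2 * x / ((n : ℝ) - 2) ≤ 2 / (n - 2) := by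
    have : (0 : ℝ) < n - 2 := by linarith
    gcongr
    linarith
  nlinarith [sq_nonneg (2 * x - 1)]

/-! ### The extremal construction -/

/-- The 1-linear hypergraph with two complementary edges of nearly equal size. -/
theorem exists_hSum_le (n : ℕ) :
    ∃ 𝓔 : Finset (Finset (Fin n)), qLinear 1 𝓔 ∧ hSum n 2 𝓔 ≤ 1 / 2 := by
  obtain ⟨A, -, hA⟩ := Finset.exists_subset_card_eq
    (s := (univ : Finset (Fin n))) (n := n / 2) (by simp; omega)
  have hAc : Aᶜ.card = n - n / 2 := by rw [Finset.card_compl, hA, Fintype.card_fin]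
  refine ⟨{A, Aᶜ}, ?_, ?_⟩
  · intro E hE E' hE' hne
    simp only [mem_insert, mem_singleton] at hE hE'
    rcases hE with rfl | rfl <;> rcases hE' with rfl | rfl <;>
      simp_all [Finset.inter_comm]
  · have hz : zeroE Finset.univ 2 {A, Aᶜ} = ∅ := by
      rw [Finset.eq_empty_iff_forall_notMem]
      intro F hF
      simp only [zeroE, secE, mem_filter, mem_powersetCard, mem_biUnion, mem_insert,
        mem_singleton, subset_univ, true_and] at hF
      obtain ⟨hF3, hF⟩ := hF
      have hsplit : (F ∩ A).card + (F ∩ Aᶜ).card = F.card := by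
        rw [← Finset.sdiff_eq_inter_compl, Finset.card_inter_add_card_sdiff]
      -- By pigeonhole, one of the two parts contains a pair of `F`.
      have key : ∀ B : Finset (Fin n), (B = A ∨ B = Aᶜ) → ¬ 2 ≤ (F ∩ B).card := by
        intro B hB h
        obtain ⟨G, hG, hG2⟩ := Finset.exists_subset_card_eq h
        exact hF G ⟨hG.trans Finset.inter_subset_left, hG2⟩
          ⟨B, hB, hG.trans Finset.inter_subset_right, hG2⟩
      have k1 := key A (Or.inl rfl)
      have k2 := key Aᶜ (Or.inr rfl)
      omega
    have he : (secE 2 {A, Aᶜ}).card ≤ (n / 2).choose 2 + (n - n / 2).choose 2 := by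
      unfold secE
      rw [Finset.biUnion_insert, Finset.singleton_biUnion]
      refine (Finset.card_union_le _ _).trans ?_
      rw [Finset.card_powersetCard, Finset.card_powersetCard, hA, hAc]
    have he' : ((secE 2 {A, Aᶜ}).card : ℝ) ≤ (n.choose 2 : ℝ) / 2 := by
      have : ((secE 2 {A, Aᶜ}).card : ℝ) ≤
          ((n / 2).choose 2 : ℕ) + ((n - n / 2).choose 2 : ℕ) := by exact_mod_cast he
      refine this.trans ?_
      simp only [Nat.cast_choose_two]
      obtain ⟨m, rfl | rfl⟩ := Nat.even_or_odd' n
      · rw [show 2 * m / 2 = m by omega, show 2 * m - m = m by omega]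
        push_cast
        nlinarith [(Nat.cast_nonneg m : (0 : ℝ) ≤ m)]
      · rw [show (2 * m + 1) / 2 = m by omega, show 2 * m + 1 - m = m + 1 by omega]
        push_cast
        nlinarith [(Nat.cast_nonneg m : (0 : ℝ) ≤ m)]
    rw [hSum_two_eq, hz]
    simp only [card_empty, Nat.cast_zero, zero_mul, add_zero]
    -- For `n ≤ 1` the binomial coefficient vanishes and its inverse is `0`.
    rcases (Nat.cast_nonneg (n.choose 2) : (0 : ℝ) ≤ _).eq_or_lt with h | h
    · rw [← h]; norm_num
    · rw [← div_eq_mul_inv, div_le_iff₀ h]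
      linarith

/-! ### The limits -/

theorem s_two_limit :
    Filter.Tendsto (fun n => sVal n 2) Filter.atTop (nhds (1 / 2)) ∧
    Filter.Tendsto (fun n => s'Val n 2) Filter.atTop (nhds (1 / 2)) := by
  have hlim : Filter.Tendsto (fun n : ℕ => (1 / 2 : ℝ) - 2 / ((n : ℝ) - 2)) Filter.atTop
      (nhds (1 / 2)) := by
    have h : Filter.Tendsto (fun n : ℕ => (n : ℝ) - 2) Filter.atTop Filter.atTop :=
      Filter.tendsto_atTop_add_const_right _ (-2 : ℝ) tendsto_natCast_atTop_atTop
    simpa using (h.const_div_atTop (2 : ℝ)).const_sub (1 / 2 : ℝ)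
  constructor
  · refine tendsto_of_tendsto_of_tendsto_of_le_of_le' hlim tendsto_const_nhds ?_ ?_
    · filter_upwards [Filter.eventually_ge_atTop 3] with n hn
      obtain ⟨𝓔, h1, -⟩ := exists_hSum_le n
      refine le_csInf ⟨_, 𝓔, h1, rfl⟩ ?_
      rintro r ⟨𝓕, -, rfl⟩
      exact hSum_lower hn 𝓕
    · filter_upwards [Filter.eventually_ge_atTop 3] with n hn
      obtain ⟨𝓔, h1, h2⟩ := exists_hSum_le n
      refine le_trans (csInf_le ⟨1 / 2 - 2 / ((n : ℝ) - 2), ?_⟩ ⟨𝓔, h1, rfl⟩) h2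
      rintro r ⟨𝓕, -, rfl⟩
      exact hSum_lower hn 𝓕
  · refine tendsto_of_tendsto_of_tendsto_of_le_of_le' hlim tendsto_const_nhds ?_ ?_
    · filter_upwards [Filter.eventually_ge_atTop 3] with n hn
      refine le_csInf ⟨_, ∅, rfl⟩ ?_
      rintro r ⟨𝓕, rfl⟩
      exact hSum_lower hn 𝓕
    · filter_upwards [Filter.eventually_ge_atTop 3] with n hn
      obtain ⟨𝓔, -, h2⟩ := exists_hSum_le n
      refine le_trans (csInf_le ⟨1 / 2 - 2 / ((n : ℝ) - 2), ?_⟩ ⟨𝓔, rfl⟩) h2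
      rintro r ⟨𝓕, rfl⟩
      exact hSum_lower hn 𝓕
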